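/- Let φ ∈ C_c^∞(ℝ³;ℝ) with |φ| ≤ 1 everywhere, φ ≡ 1 on the ball B_{1/2}(0), and supp φ ⊂ B₁(0); let w̄₂, b̄ ∈ ℝ and N ≥ 1. Define W: ℝ³ → ℝ³ by W(y) = (1/N²) ( ∂²_{y₁y₂}(w̄₂ φ(y) sin(N y₁)) + ∂²_{y₁y₃}(b̄ φ(y) sin(N y₁)), −∂²_{y₁y₁}(w̄₂ φ(y) sin(N y₁)), −∂²_{y₁y₁}(b̄ φ(y) sin(N y₁)) ). Then: (a) W is smooth, supp W ⊂ B₁(0), and div W(y) = 0 for all y ∈ ℝ³; (b) W(y) = (0, w̄₂, b̄) sin(N y₁) for all y ∈ B_{1/2}(0); (c) there is a universal constant C > 0 such that sup_{y∈ℝ³} |W(y) − φ(y)(0, w̄₂ sin(N y₁), b̄ sin(N y₁))| ≤ (C/N)(|w̄₂| + |b̄|) ‖φ‖_{C²}. -/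

import Mathlib

/-!
The three displayed second derivatives are computed by the Leibniz rule: for `g = c φ sin(N y₁)`,
`∂₁∂₁ g = c (∂₁∂₁φ sin + 2 N ∂₁φ cos - N² φ sin)`, and for `k ≠ 1`,
`∂₁∂ₖ g = c (∂₁∂ₖφ sin + N ∂ₖφ cos)` (`pd3_zero_zero_wave`, `pd3_zero_wave`). After multiplication
by `N⁻²` the term `-N² φ sin` gives exactly the main part `φ (0, w̄₂, b̄) sin(N y₁)`, and every other
term carries a derivative of `φ` and a factor of at most `N⁻¹`. Hence the remainder is at most
`(3 / N) (|w̄₂| + |b̄|) ‖φ‖_{C²}`; it vanishes on `B_{1/2}(0)`, where `φ` is constant, and all terms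
vanish off the support of `φ`. The divergence cancels because partial derivatives of smooth
functions commute (`pd3_comm`).

Since `C2norm` is a real supremum, bounding by it requires the family to be bounded; this holds
because `φ` and its derivatives are continuous with compact support (`abs_le_C2norm`).
-/


open MeasureTheory

noncomputable section

/-- Partial derivative in the `i`-th coordinate direction on `ℝ³`. -/
noncomputable def pd3 (i : Fin 3) (g : EuclideanSpace ℝ (Fin 3) → ℝ) :
    EuclideanSpace ℝ (Fin 3) → ℝ :=
  fun y => fderiv ℝ g y (EuclideanSpace.single i 1)

/-- The `C²` norm of `φ`: the supremum of `|φ|` and of all its first and second partial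
derivatives. -/
noncomputable def C2norm (φ : EuclideanSpace ℝ (Fin 3) → ℝ) : ℝ :=
  ⨆ x, max |φ x| (max (⨆ i, |pd3 i φ x|) (⨆ i, ⨆ j, |pd3 i (pd3 j φ) x|))

/-- `ℝ³` with the Euclidean norm. -/
local notation "E3" => EuclideanSpace ℝ (Fin 3)

lemma contDiff_pd3 {g : E3 → ℝ} (hg : ContDiff ℝ (⊤ : ℕ∞) g) (i : Fin 3) :
    ContDiff ℝ (⊤ : ℕ∞) (pd3 i g) := by
  have h : ContDiff ℝ (⊤ : ℕ∞) (fderiv ℝ g) := hg.fderiv_right (by norm_cast)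
  exact h.clm_apply contDiff_const

lemma differentiable_of_smooth {g : E3 → ℝ} (hg : ContDiff ℝ (⊤ : ℕ∞) g) :
    Differentiable ℝ g := hg.differentiable (by simp)

lemma pd3_comm {g : E3 → ℝ} (hg : ContDiff ℝ (⊤ : ℕ∞) g) (i j : Fin 3) :
    pd3 i (pd3 j g) = pd3 j (pd3 i g) := by
  funext y
  have hd : DifferentiableAt ℝ (fderiv ℝ g) y :=
    (show ContDiff ℝ (⊤ : ℕ∞) (fderiv ℝ g) from
      hg.fderiv_right (by norm_cast)).differentiable (by simp) y
  have key : ∀ a b : Fin 3, pd3 a (pd3 b g) y =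
      fderiv ℝ (fderiv ℝ g) y (EuclideanSpace.single a 1) (EuclideanSpace.single b 1) := by
    intro a b
    have h := (hd.hasFDerivAt.clm_apply
      (hasFDerivAt_const (EuclideanSpace.single b (1 : ℝ)) y)).fderiv
    unfold pd3
    rw [h]
    simp
  rw [key, key]
  have hs : IsSymmSndFDerivAt ℝ g y :=
    hg.contDiffAt.isSymmSndFDerivAt (by simp; norm_cast)
  exact hs _ _

lemma tsupport_pd3_subset (i : Fin 3) (g : E3 → ℝ) : tsupport (pd3 i g) ⊆ tsupport g :=
  tsupport_fderiv_apply_subset ℝ _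

lemma pd3_eq_zero_of_const_nhds {g : E3 → ℝ} {c : ℝ} {s : Set E3} (hs : IsOpen s)
    (hg : ∀ y ∈ s, g y = c) (i : Fin 3) : ∀ y ∈ s, pd3 i g y = 0 := by
  intro y hy
  have h : g =ᶠ[nhds y] fun _ => c := by
    filter_upwards [hs.mem_nhds hy] with z hz using hg z hz
  simp [pd3, h.fderiv_eq]

/-- Every competitor in the supremum defining `C2norm φ` is at most `C2norm φ`; compact support is
what makes that supremum finite. -/
lemma abs_le_C2norm {φ : E3 → ℝ} (hφ : ContDiff ℝ (⊤ : ℕ∞) φ) (hc : HasCompactSupport φ) (y : E3) :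
    |φ y| ≤ C2norm φ ∧ (∀ i, |pd3 i φ y| ≤ C2norm φ) ∧
      ∀ i j, |pd3 i (pd3 j φ) y| ≤ C2norm φ := by
  have hbd : ∀ g : E3 → ℝ, ContDiff ℝ (⊤ : ℕ∞) g → tsupport g ⊆ tsupport φ →
      ∃ B, ∀ x, |g x| ≤ B := by
    intro g hg hsub
    have hcg : HasCompactSupport g := hc.of_isClosed_subset (isClosed_tsupport g) hsub
    exact hcg.exists_bound_of_continuous hg.continuous
  obtain ⟨B0, h0⟩ := hbd φ hφ subset_rfl
  have h1' := fun i => hbd (pd3 i φ) (contDiff_pd3 hφ i) (tsupport_pd3_subset i φ)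
  choose B1 h1 using h1'
  have h2' := fun i j => hbd (pd3 i (pd3 j φ)) (contDiff_pd3 (contDiff_pd3 hφ j) i)
    ((tsupport_pd3_subset i _).trans (tsupport_pd3_subset j φ))
  choose B2 h2 using h2'
  have hB : BddAbove (Set.range fun x =>
      max |φ x| (max (⨆ i, |pd3 i φ x|) (⨆ i, ⨆ j, |pd3 i (pd3 j φ) x|))) := by
    refine ⟨max B0 (max (⨆ i, B1 i) (⨆ i, ⨆ j, B2 i j)), ?_⟩
    rintro _ ⟨x, rfl⟩
    refine max_le_max (h0 x) (max_le_max ?_ ?_)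
    · exact ciSup_mono (Set.finite_range _).bddAbove fun i => h1 i x
    · exact ciSup_mono (Set.finite_range _).bddAbove fun i =>
        ciSup_mono (Set.finite_range _).bddAbove fun j => h2 i j x
  have hle := le_ciSup hB y
  change _ ≤ C2norm φ at hle
  refine ⟨(le_max_left _ _).trans hle, fun i => ?_, fun i j => ?_⟩
  · refine le_trans ?_ hle
    exact le_max_of_le_right (le_max_of_le_left
      (le_ciSup (f := fun i => |pd3 i φ y|) (Set.finite_range _).bddAbove i))
  · refine le_trans ?_ hle
    refine le_max_of_le_right (le_max_of_le_right ?_)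
    exact (le_ciSup (f := fun j => |pd3 i (pd3 j φ) y|) (Set.finite_range _).bddAbove j).trans
      (le_ciSup (f := fun i => ⨆ j, |pd3 i (pd3 j φ) y|) (Set.finite_range _).bddAbove i)

lemma hasFDerivAt_phase (N : ℝ) (y : E3) :
    HasFDerivAt (fun x : E3 => N * x 0) (N • (EuclideanSpace.proj 0 : E3 →L[ℝ] ℝ)) y :=
  (EuclideanSpace.proj (𝕜 := ℝ) (0 : Fin 3)).hasFDerivAt.const_mul N

/-- Leibniz rule for `f sin(N y₁) + g cos(N y₁)`, a form stable under differentiation. -/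
lemma pd3_sin_cos {f g : E3 → ℝ} (hf : Differentiable ℝ f) (hg : Differentiable ℝ g) (N : ℝ)
    (j : Fin 3) (y : E3) :
    pd3 j (fun x => f x * Real.sin (N * x 0) + g x * Real.cos (N * x 0)) y =
      (pd3 j f y - N * (EuclideanSpace.single j (1 : ℝ) : E3) 0 * g y) * Real.sin (N * y 0) +
      (pd3 j g y + N * (EuclideanSpace.single j (1 : ℝ) : E3) 0 * f y) * Real.cos (N * y 0) := by
  have h := ((hf y).hasFDerivAt.mul (hasFDerivAt_phase N y).sin).add
    ((hg y).hasFDerivAt.mul (hasFDerivAt_phase N y).cos)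
  unfold pd3
  rw [show (fun x : E3 => f x * Real.sin (N * x 0) + g x * Real.cos (N * x 0)) =
    ((f * fun x : E3 => Real.sin (N * x 0)) + g * fun x : E3 => Real.cos (N * x 0)) from rfl,
    h.fderiv]
  simp only [add_apply, smul_apply, smul_eq_mul,
    EuclideanSpace.coe_proj]
  ring

lemma pd3_const_mul {f : E3 → ℝ} (hf : Differentiable ℝ f) (c : ℝ) (j : Fin 3) (y : E3) :
    pd3 j (fun x => c * f x) y = c * pd3 j f y := by
  simp [pd3, fderiv_const_mul (hf y)]

lemma pd3_wave {φ : E3 → ℝ} (hφ : ContDiff ℝ (⊤ : ℕ∞) φ) (c N : ℝ) (j : Fin 3) :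
    pd3 j (fun x => c * φ x * Real.sin (N * x 0)) = fun y =>
      c * pd3 j φ y * Real.sin (N * y 0) +
      (c * (N * (EuclideanSpace.single j (1 : ℝ) : E3) 0) * φ y) * Real.cos (N * y 0) := by
  funext y
  have h := pd3_sin_cos (f := fun x => c * φ x) (g := fun _ => 0)
    ((differentiable_of_smooth hφ).const_mul c) (differentiable_const 0) N j y
  simp only [zero_mul, add_zero] at h
  rw [h, pd3_const_mul (differentiable_of_smooth hφ)]
  have h0 : pd3 j (fun _ : E3 => (0 : ℝ)) y = 0 := by simp [pd3]
  rw [h0]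
  ring

lemma pd3_zero_pd3_wave {φ : E3 → ℝ} (hφ : ContDiff ℝ (⊤ : ℕ∞) φ) (c N : ℝ) (j : Fin 3) (y : E3) :
    pd3 0 (pd3 j fun x => c * φ x * Real.sin (N * x 0)) y =
      (c * pd3 0 (pd3 j φ) y - N * (c * (N * (EuclideanSpace.single j (1 : ℝ) : E3) 0) * φ y)) *
        Real.sin (N * y 0) +
      (c * (N * (EuclideanSpace.single j (1 : ℝ) : E3) 0) * pd3 0 φ y + N * (c * pd3 j φ y)) *
        Real.cos (N * y 0) := by
  rw [pd3_wave hφ, pd3_sin_cos ((differentiable_of_smooth (contDiff_pd3 hφ j)).const_mul c)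
    ((differentiable_of_smooth hφ).const_mul _),
    pd3_const_mul (differentiable_of_smooth (contDiff_pd3 hφ j)),
    pd3_const_mul (differentiable_of_smooth hφ)]
  simp

lemma pd3_zero_zero_wave {φ : E3 → ℝ} (hφ : ContDiff ℝ (⊤ : ℕ∞) φ) (c N : ℝ) (y : E3) :
    pd3 0 (pd3 0 fun x => c * φ x * Real.sin (N * x 0)) y =
      c * (pd3 0 (pd3 0 φ) y * Real.sin (N * y 0) + 2 * N * pd3 0 φ y * Real.cos (N * y 0)
        - N ^ 2 * φ y * Real.sin (N * y 0)) := by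
  rw [pd3_zero_pd3_wave hφ]
  simp
  ring

lemma pd3_zero_wave {φ : E3 → ℝ} (hφ : ContDiff ℝ (⊤ : ℕ∞) φ) (c N : ℝ) {j : Fin 3} (hj : j ≠ 0)
    (y : E3) :
    pd3 0 (pd3 j fun x => c * φ x * Real.sin (N * x 0)) y =
      c * (pd3 0 (pd3 j φ) y * Real.sin (N * y 0) + N * pd3 j φ y * Real.cos (N * y 0)) := by
  rw [pd3_zero_pd3_wave hφ]
  simp [hj.symm]
  ring

/-- The remainder terms: derivatives of `φ` of size `M` times `sin` or `cos`, rescaled by `N⁻²`. -/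
lemma remainder_bound {N M a b s t k : ℝ} (hN : 1 ≤ N) (hk : 0 ≤ k) (ha : |a| ≤ M) (hb : |b| ≤ M)
    (hs : |s| ≤ 1) (ht : |t| ≤ 1) :
    |(N ^ 2)⁻¹ * (a * s + k * N * b * t)| ≤ (1 + k) / N * M := by
  have hN0 : 0 < N := by linarith
  have hM : 0 ≤ M := (abs_nonneg a).trans ha
  have h1 : |a * s| ≤ M := by
    rw [abs_mul]; exact (mul_le_mul ha hs (abs_nonneg _) hM).trans_eq (mul_one M)
  have h2 : |b * t| ≤ M := by
    rw [abs_mul]; exact (mul_le_mul hb ht (abs_nonneg _) hM).trans_eq (mul_one M)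
  have h3 : |a * s + k * N * b * t| ≤ (1 + k) * N * M := by
    have h4 : |k * N * b * t| ≤ k * N * M := by
      rw [show k * N * b * t = k * N * (b * t) by ring, abs_mul, abs_of_nonneg (by positivity)]
      gcongr
    have h5 : M ≤ N * M := le_mul_of_one_le_left hM hN
    calc _ ≤ |a * s| + |k * N * b * t| := abs_add_le _ _
      _ ≤ (1 + k) * N * M := by linarith
  rw [abs_mul, abs_of_pos (by positivity)]
  calc _ ≤ (N ^ 2)⁻¹ * ((1 + k) * N * M) := by gcongr
    _ = _ := by field_simp

/-- The explicit compactly supported, divergence-free, oscillatory field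
`W = N⁻² (∂²₁₂(w̄₂ φ sin(Ny₁)) + ∂²₁₃(b̄ φ sin(Ny₁)), −∂²₁₁(w̄₂ φ sin(Ny₁)),
−∂²₁₁(b̄ φ sin(Ny₁)))`: it is smooth, supported in `B₁(0)`, divergence-free, equals
`(0, w̄₂, b̄) sin(Ny₁)` on `B_{1/2}(0)`, and is `(C/N)(|w̄₂|+|b̄|)‖φ‖_{C²}`-close to
`φ·(0, w̄₂ sin(Ny₁), b̄ sin(Ny₁))`, with a universal constant `C > 0`. -/
theorem stmt_12 :
    ∃ C : ℝ, 0 < C ∧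
      ∀ φ : EuclideanSpace ℝ (Fin 3) → ℝ, ContDiff ℝ (⊤ : ℕ∞) φ → HasCompactSupport φ →
      (∀ y, |φ y| ≤ 1) →
      (∀ y ∈ Metric.ball (0 : EuclideanSpace ℝ (Fin 3)) (1 / 2), φ y = 1) →
      tsupport φ ⊆ Metric.ball (0 : EuclideanSpace ℝ (Fin 3)) 1 →
      ∀ w2 bb N : ℝ, 1 ≤ N →
      ∀ W : EuclideanSpace ℝ (Fin 3) → Fin 3 → ℝ,
      W = (fun y => (N ^ 2)⁻¹ •
        ![pd3 0 (pd3 1 fun x => w2 * φ x * Real.sin (N * x 0)) y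
            + pd3 0 (pd3 2 fun x => bb * φ x * Real.sin (N * x 0)) y,
          -pd3 0 (pd3 0 fun x => w2 * φ x * Real.sin (N * x 0)) y,
          -pd3 0 (pd3 0 fun x => bb * φ x * Real.sin (N * x 0)) y]) →
      -- (a) smooth, supported in B₁(0), divergence-free
      (ContDiff ℝ (⊤ : ℕ∞) W ∧
        tsupport W ⊆ Metric.ball (0 : EuclideanSpace ℝ (Fin 3)) 1 ∧
        (∀ y, ∑ i : Fin 3,
          fderiv ℝ (fun y' => W y' i) y (EuclideanSpace.single i 1) = 0)) ∧
      -- (b) explicit oscillation on B_{1/2}(0)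
      (∀ y ∈ Metric.ball (0 : EuclideanSpace ℝ (Fin 3)) (1 / 2),
        W y = Real.sin (N * y 0) • ![0, w2, bb]) ∧
      -- (c) uniform closeness to φ · (0, w̄₂ sin(Ny₁), b̄ sin(Ny₁))
      (∀ y, ‖W y - φ y • ![0, w2 * Real.sin (N * y 0), bb * Real.sin (N * y 0)]‖ ≤
        (C / N) * (|w2| + |bb|) * C2norm φ) := by
  refine ⟨3, by norm_num, ?_⟩
  intro φ hφ hc _ h1 hsupp w2 bb N hN W hW
  have hN0 : N ≠ 0 := by linarith
  have hwave : ∀ c : ℝ, ContDiff ℝ (⊤ : ℕ∞)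
      (fun x : EuclideanSpace ℝ (Fin 3) => c * φ x * Real.sin (N * x 0)) := by
    intro c
    have hx : ContDiff ℝ (⊤ : ℕ∞) (fun x : EuclideanSpace ℝ (Fin 3) => x 0) :=
      (EuclideanSpace.proj (𝕜 := ℝ) (0 : Fin 3)).contDiff
    exact (contDiff_const.mul hφ).mul (contDiff_const.mul hx).sin
  have hW0 : ∀ y, W y 0 = (N ^ 2)⁻¹ *
      (pd3 0 (pd3 1 fun x => w2 * φ x * Real.sin (N * x 0)) y
        + pd3 0 (pd3 2 fun x => bb * φ x * Real.sin (N * x 0)) y) := by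
    intro y; rw [hW]; rfl
  have hW1 : ∀ y, W y 1 = (N ^ 2)⁻¹ *
      -pd3 0 (pd3 0 fun x => w2 * φ x * Real.sin (N * x 0)) y := by
    intro y; rw [hW]; rfl
  have hW2 : ∀ y, W y 2 = (N ^ 2)⁻¹ *
      -pd3 0 (pd3 0 fun x => bb * φ x * Real.sin (N * x 0)) y := by
    intro y; rw [hW]; rfl
  have hsm : ∀ (c : ℝ) (j : Fin 3), ContDiff ℝ (⊤ : ℕ∞)
      (pd3 0 (pd3 j fun x => c * φ x * Real.sin (N * x 0))) := fun c j =>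
    contDiff_pd3 (contDiff_pd3 (hwave c) j) 0
  -- The explicit expansion of each component of `W`.
  have e0 : ∀ y, W y 0 =
      w2 * ((N ^ 2)⁻¹ * (pd3 0 (pd3 1 φ) y * Real.sin (N * y 0)
        + 1 * N * pd3 1 φ y * Real.cos (N * y 0))) +
      bb * ((N ^ 2)⁻¹ * (pd3 0 (pd3 2 φ) y * Real.sin (N * y 0)
        + 1 * N * pd3 2 φ y * Real.cos (N * y 0))) := by
    intro y
    rw [hW0, pd3_zero_wave hφ _ _ (by decide), pd3_zero_wave hφ _ _ (by decide)]
    ring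
  have e12 : ∀ c y, (N ^ 2)⁻¹ * -pd3 0 (pd3 0 fun x => c * φ x * Real.sin (N * x 0)) y =
      φ y * (c * Real.sin (N * y 0)) -
      c * ((N ^ 2)⁻¹ * (pd3 0 (pd3 0 φ) y * Real.sin (N * y 0)
        + 2 * N * pd3 0 φ y * Real.cos (N * y 0))) := by
    intro c y
    rw [pd3_zero_zero_wave hφ]
    field_simp
    ring
  refine ⟨⟨?_, ?_, ?_⟩, ?_, ?_⟩
  · rw [contDiff_pi]
    intro i
    fin_cases i
    · change ContDiff ℝ _ fun y => W y 0
      rw [funext hW0]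
      exact contDiff_const.mul ((hsm w2 1).add (hsm bb 2))
    · change ContDiff ℝ _ fun y => W y 1
      rw [funext hW1]
      exact contDiff_const.mul (hsm w2 0).neg
    · change ContDiff ℝ _ fun y => W y 2
      rw [funext hW2]
      exact contDiff_const.mul (hsm bb 0).neg
  · refine (closure_minimal ?_ (isClosed_tsupport φ)).trans hsupp
    intro y hy
    by_contra hny
    apply hy
    have z0 : φ y = 0 := image_eq_zero_of_notMem_tsupport hny
    have z1 : ∀ i, pd3 i φ y = 0 := fun i =>
      image_eq_zero_of_notMem_tsupport fun h => hny (tsupport_pd3_subset i φ h)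
    have z2 : ∀ i j, pd3 i (pd3 j φ) y = 0 := fun i j =>
      image_eq_zero_of_notMem_tsupport fun h =>
        hny (tsupport_pd3_subset j φ (tsupport_pd3_subset i _ h))
    funext i
    fin_cases i
    · change W y 0 = 0
      rw [e0]; simp [z1, z2]
    · change W y 1 = 0
      rw [hW1, e12]; simp [z0, z1, z2]
    · change W y 2 = 0
      rw [hW2, e12]; simp [z0, z1, z2]
  · intro y
    have hd : ∀ (c : ℝ) (j : Fin 3), DifferentiableAt ℝ
      (pd3 0 (pd3 j fun x => c * φ x * Real.sin (N * x 0))) y := fun c j =>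
      differentiable_of_smooth (hsm c j) y
    -- `∂₁∂₁∂ₖ = ∂ₖ∂₁∂₁` on each wave.
    have hcomm : ∀ (c : ℝ) (j : Fin 3),
        pd3 0 (pd3 0 (pd3 j fun x => c * φ x * Real.sin (N * x 0))) =
        pd3 j (pd3 0 (pd3 0 fun x => c * φ x * Real.sin (N * x 0))) := by
      intro c j
      rw [pd3_comm (hwave c) 0 j, pd3_comm (contDiff_pd3 (hwave c) 0) 0 j]
    have d0 : fderiv ℝ (fun y' => W y' 0) y (EuclideanSpace.single 0 1) = (N ^ 2)⁻¹ *
        (pd3 0 (pd3 0 (pd3 1 fun x => w2 * φ x * Real.sin (N * x 0))) y +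
         pd3 0 (pd3 0 (pd3 2 fun x => bb * φ x * Real.sin (N * x 0))) y) := by
      rw [funext hW0, (((hd w2 1).hasFDerivAt.fun_add (hd bb 2).hasFDerivAt).const_mul _).fderiv]
      rfl
    have d1 : fderiv ℝ (fun y' => W y' 1) y (EuclideanSpace.single 1 1) = (N ^ 2)⁻¹ *
        -pd3 1 (pd3 0 (pd3 0 fun x => w2 * φ x * Real.sin (N * x 0))) y := by
      rw [funext hW1, ((hd w2 0).hasFDerivAt.fun_neg.const_mul _).fderiv]
      rfl
    have d2 : fderiv ℝ (fun y' => W y' 2) y (EuclideanSpace.single 2 1) = (N ^ 2)⁻¹ *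
        -pd3 2 (pd3 0 (pd3 0 fun x => bb * φ x * Real.sin (N * x 0))) y := by
      rw [funext hW2, ((hd bb 0).hasFDerivAt.fun_neg.const_mul _).fderiv]
      rfl
    rw [Fin.sum_univ_three, d0, d1, d2, hcomm, hcomm]
    ring
  · intro y hy
    have z1 := fun i => pd3_eq_zero_of_const_nhds Metric.isOpen_ball h1 i
    have z2 := fun i j => pd3_eq_zero_of_const_nhds Metric.isOpen_ball (z1 j) i y hy
    have z1y := fun i => z1 i y hy
    funext i
    fin_cases i
    · change W y 0 = Real.sin (N * y 0) * 0
      rw [e0]; simp [z1y, z2]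
    · change W y 1 = Real.sin (N * y 0) * w2
      rw [hW1, e12]; simp [z1y, z2, h1 y hy, mul_comm]
    · change W y 2 = Real.sin (N * y 0) * bb
      rw [hW2, e12]; simp [z1y, z2, h1 y hy, mul_comm]
  · intro y
    obtain ⟨m0, m1, m2⟩ := abs_le_C2norm hφ hc y
    have hM : 0 ≤ C2norm φ := (abs_nonneg _).trans m0
    have hs := Real.abs_sin_le_one (N * y 0)
    have ht := Real.abs_cos_le_one (N * y 0)
    have r1 := fun j => remainder_bound hN zero_le_one (m2 0 j) (m1 j) hs ht
    have r2 := remainder_bound hN zero_le_two (m2 0 0) (m1 0) hs ht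
    have key : ∀ c r : ℝ, |r| ≤ 3 / N * C2norm φ → |c * r| ≤ |c| * (3 / N * C2norm φ) := by
      intro c r hr
      rw [abs_mul]; gcongr
    have r1' := fun j => (r1 j).trans
      (show (1 + 1) / N * C2norm φ ≤ 3 / N * C2norm φ by gcongr; norm_num)
    have r2' := r2.trans
      (show (1 + 2) / N * C2norm φ ≤ 3 / N * C2norm φ by gcongr; norm_num)
    have hw : 0 ≤ |w2| * (3 / N * C2norm φ) := by positivity
    have hb : 0 ≤ |bb| * (3 / N * C2norm φ) := by positivity
    have hsplit : 3 / N * (|w2| + |bb|) * C2norm φ =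
        |w2| * (3 / N * C2norm φ) + |bb| * (3 / N * C2norm φ) := by ring
    rw [hsplit]
    refine (pi_norm_le_iff_of_nonneg (by positivity)).2 fun i => ?_
    fin_cases i
    · change |W y 0 - φ y * 0| ≤ _
      rw [e0, mul_zero, sub_zero]
      exact (abs_add_le _ _).trans (add_le_add (key w2 _ (r1' 1)) (key bb _ (r1' 2)))
    · change |W y 1 - φ y * (w2 * Real.sin (N * y 0))| ≤ _
      rw [hW1, e12, sub_sub_cancel_left, abs_neg]
      exact (key w2 _ r2').trans (le_add_of_nonneg_right hb)
    · change |W y 2 - φ y * (bb * Real.sin (N * y 0))| ≤ _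
      rw [hW2, e12, sub_sub_cancel_left, abs_neg]
      exact (key bb _ r2').trans (le_add_of_nonneg_left hw)
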